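/- Let Q_1 and Q_2 be QGPs and let S be a POM match relation witnessing Q_1 ▷ Q_2. Then for every data graph G with Q_1 ≺_c G, every pairs (u_1,u_2) ∈ S and (w_1,w_2) ∈ S, and all edges e_1 = (u_1,w_1) ∈ E_1 and e_2 = (u_2,w_2) ∈ E_2 with L_1(e_1) = L_2(e_2) and C_1(e_1) ≥ C_2(e_2), the match result satisfies M^G_{Q_1}(e_1) ⊆ M^G_{Q_2}(e_2). -/

import Mathlib

/-! Formalization of graph patterns from "Revisited Containment for Graph Patterns".
Labels are modeled as natural numbers, attribute names as naturals, attribute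
values as integers. -/

/-- Comparison operators allowed in atomic attribute constraints. -/
inductive AOp : Type
  | ge | le | eq | ne
deriving DecidableEq

/-- `AOp.holds op c' c` : the value `c'` satisfies the constraint `_ op c`. -/
def AOp.holds : AOp → ℤ → ℤ → Prop
  | .ge, c', c => c' ≥ c
  | .le, c', c => c' ≤ c
  | .eq, c', c => c' = c
  | .ne, c', c => c' ≠ c

/-- A finite conjunction of atomic constraints `A op c`. -/
abbrev AttrConstraints := Finset (ℕ × AOp × ℤ)

/-- `A(v) ∼ A_P(u)` : the attribute values of a data node (a partial map from
attribute names to values) match the attribute constraints of a pattern node. -/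
def attrMatch (a : ℕ → Option ℤ) (P : AttrConstraints) : Prop :=
  ∀ c ∈ P, ∃ c', a c.1 = some c' ∧ c.2.1.holds c' c.2.2

/-- `A_1(u_1) ∼ A_2(u_2)` : the constraints over each attribute in `P2` are
entailed by those over the same attribute in `P1`. -/
def constrEntails (P1 P2 : AttrConstraints) : Prop :=
  ∀ c2 ∈ P2, ∀ x : ℤ,
    (∀ c1 ∈ P1, c1.1 = c2.1 → c1.2.1.holds x c1.2.2) → c2.2.1.holds x c2.2.2

/-- A data graph: finite node set, directed edges, labels on nodes and edges,
and a partial attribute-value map on nodes. -/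
structure DataGraph (V : Type) where
  nodes : Finset V
  edges : Finset (V × V)
  nlabel : V → ℕ
  elabel : V × V → ℕ
  attr : V → ℕ → Option ℤ

/-- Well-formedness of a data graph: edges connect nodes. -/
def DataGraph.WellFormed {V : Type} (G : DataGraph V) : Prop :=
  ∀ e ∈ G.edges, e.1 ∈ G.nodes ∧ e.2 ∈ G.nodes

/-- `Gs` is a subgraph of `G`. -/
def IsSubgraph {V : Type} (Gs G : DataGraph V) : Prop :=
  Gs.WellFormed ∧ Gs.nodes ⊆ G.nodes ∧ Gs.edges ⊆ G.edges ∧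
  (∀ v ∈ Gs.nodes, Gs.nlabel v = G.nlabel v ∧ Gs.attr v = G.attr v) ∧
  (∀ e ∈ Gs.edges, Gs.elabel e = G.elabel e)

/-- A quantified graph pattern (QGP): nodes, edges, labels, attribute
constraints on nodes and counting quantifiers on edges. -/
structure QGP (V : Type) where
  nodes : Finset V
  edges : Finset (V × V)
  nlabel : V → ℕ
  elabel : V × V → ℕ
  attrC : V → AttrConstraints
  cq : V × V → ℕ

/-- Undirected adjacency in a pattern. -/
def QGP.Adj {V : Type} (Q : QGP V) (u w : V) : Prop :=
  (u, w) ∈ Q.edges ∨ (w, u) ∈ Q.edges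

/-- Well-formedness of a QGP: edges connect nodes, counting quantifiers are
at least 1, and the pattern is connected. -/
def QGP.WellFormed {V : Type} (Q : QGP V) : Prop :=
  (∀ e ∈ Q.edges, e.1 ∈ Q.nodes ∧ e.2 ∈ Q.nodes) ∧
  (∀ e ∈ Q.edges, 1 ≤ Q.cq e) ∧
  (∀ u ∈ Q.nodes, ∀ w ∈ Q.nodes, Relation.ReflTransGen Q.Adj u w)

/-- A POM (pattern-only matching) match relation of `Q1` in `Q2`:
conditions (1)–(3) of Definition of pattern-only matching. -/
def IsPOMRel {V1 V2 : Type} (Q1 : QGP V1) (Q2 : QGP V2) (S : Set (V1 × V2)) : Prop :=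
  (∀ p ∈ S, p.1 ∈ Q1.nodes ∧ p.2 ∈ Q2.nodes) ∧
  (∀ p ∈ S, Q1.nlabel p.1 = Q2.nlabel p.2 ∧ constrEntails (Q1.attrC p.1) (Q2.attrC p.2)) ∧
  (∀ p ∈ S, ∀ w2, (w2, p.2) ∈ Q2.edges →
      ∃ w1, (w1, p.1) ∈ Q1.edges ∧ (w1, w2) ∈ S ∧
        Q1.elabel (w1, p.1) = Q2.elabel (w2, p.2)) ∧
  (∀ p ∈ S, ∀ w2, (p.2, w2) ∈ Q2.edges →
      ∃ w1, (p.1, w1) ∈ Q1.edges ∧ (w1, w2) ∈ S ∧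
        Q1.elabel (p.1, w1) = Q2.elabel (p.2, w2) ∧
        Q2.cq (p.2, w2) ≤ Q1.cq (p.1, w1))

/-- `Q1 ▷ Q2` : `Q1` matches `Q2` (pattern-only matching). -/
def POM {V1 V2 : Type} (Q1 : QGP V1) (Q2 : QGP V2) : Prop :=
  ∃ S : Set (V1 × V2), IsPOMRel Q1 Q2 S ∧ ∀ u2 ∈ Q2.nodes, ∃ u1, (u1, u2) ∈ S

/-- A conditional-simulation relation of a QGP `Q` in a data graph `G`
(conditions (1)–(3) of conditional simulation). -/
def IsSimRel {VP VD : Type} (Q : QGP VP) (G : DataGraph VD) (S : Set (VP × VD)) : Prop :=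
  (∀ p ∈ S, p.1 ∈ Q.nodes ∧ p.2 ∈ G.nodes) ∧
  (∀ p ∈ S, Q.nlabel p.1 = G.nlabel p.2 ∧ attrMatch (G.attr p.2) (Q.attrC p.1)) ∧
  (∀ p ∈ S, ∀ u', (p.1, u') ∈ Q.edges →
      ∃ T : Finset VD, Q.cq (p.1, u') ≤ T.card ∧
        ∀ v' ∈ T, (p.2, v') ∈ G.edges ∧
          G.elabel (p.2, v') = Q.elabel (p.1, u') ∧ (u', v') ∈ S) ∧
  (∀ p ∈ S, ∀ u', (u', p.1) ∈ Q.edges →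
      ∃ v', (v', p.2) ∈ G.edges ∧
        G.elabel (v', p.2) = Q.elabel (u', p.1) ∧ (u', v') ∈ S)

/-- `Q ≺_c G` via the relation `S` (conditions (1)–(4)). -/
def QGP.MatchesVia {VP VD : Type} (Q : QGP VP) (G : DataGraph VD)
    (S : Set (VP × VD)) : Prop :=
  IsSimRel Q G S ∧ ∀ u ∈ Q.nodes, ∃ v, (u, v) ∈ S

/-- `Q ≺_c G` : the data graph `G` matches the QGP `Q` via conditional simulation. -/
def QGP.Matches {VP VD : Type} (Q : QGP VP) (G : DataGraph VD) : Prop :=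
  ∃ S : Set (VP × VD), Q.MatchesVia G S

/-- The maximum conditional-simulation relation `S^G_Q` of a QGP in a data graph. -/
def QGP.maxRel {VP VD : Type} (Q : QGP VP) (G : DataGraph VD) : Set (VP × VD) :=
  ⋃₀ {S | IsSimRel Q G S}

/-- The match result `M^G_Q` on pattern nodes (∅ when `Q ⊀_c G`). -/
def QGP.MN {VP VD : Type} (Q : QGP VP) (G : DataGraph VD) (u : VP) : Set VD :=
  {v | Q.Matches G ∧ (u, v) ∈ Q.maxRel G}

/-- The match result `M^G_Q` on pattern edges (∅ when `Q ⊀_c G`). -/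
def QGP.ME {VP VD : Type} (Q : QGP VP) (G : DataGraph VD) (e : VP × VP) : Set (VD × VD) :=
  {d | Q.Matches G ∧ d ∈ G.edges ∧ (e.1, d.1) ∈ Q.maxRel G ∧
      (e.2, d.2) ∈ Q.maxRel G ∧ G.elabel d = Q.elabel e}

/-- A data node `v` satisfies a predicate (a QGP with query focus `u`) in `G`:
there is a subgraph of `G` matching the predicate via a relation containing `(u,v)`. -/
def SatPred {VP VD : Type} (Q : QGP VP) (G : DataGraph VD) (u : VP) (v : VD) : Prop :=
  ∃ (Gs : DataGraph VD) (S : Set (VP × VD)),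
    IsSubgraph Gs G ∧ Q.MatchesVia Gs S ∧ (u, v) ∈ S

/-- The shape (nodes, edges, query focus) of a predicate of a CGP. -/
structure PredShape (V : Type) where
  nodes : Finset V
  edges : Finset (V × V)
  focus : V

/-- A conditional graph pattern (CGP): global labelling/attribute/quantifier
data, a core, and finite sets of positive and negative predicates, each with
its query focus. -/
structure CGP (V : Type) where
  nlabel : V → ℕ
  elabel : V × V → ℕ
  attrC : V → AttrConstraints
  cq : V × V → ℕ
  coreNodes : Finset V
  coreEdges : Finset (V × V)
  pos : Finset (PredShape V)
  neg : Finset (PredShape V)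

/-- The core of a CGP, as a QGP. -/
def CGP.coreQGP {V : Type} (C : CGP V) : QGP V :=
  ⟨C.coreNodes, C.coreEdges, C.nlabel, C.elabel, C.attrC, C.cq⟩

/-- A predicate of a CGP, as a QGP. -/
def CGP.predQGP {V : Type} (C : CGP V) (q : PredShape V) : QGP V :=
  ⟨q.nodes, q.edges, C.nlabel, C.elabel, C.attrC, C.cq⟩

/-- The set `E⁺` of edges of positive predicates. -/
def CGP.posEdges {V : Type} [DecidableEq V] (C : CGP V) : Finset (V × V) :=
  C.pos.biUnion (·.edges)

/-- The set `E⁻` of edges of negative predicates. -/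
def CGP.negEdges {V : Type} [DecidableEq V] (C : CGP V) : Finset (V × V) :=
  C.neg.biUnion (·.edges)

/-- The positive version `C⁺` of a CGP: the QGP with nodes `V ∪ V⁺`
and edges `E ∪ E⁺`. -/
def CGP.posVersion {V : Type} [DecidableEq V] (C : CGP V) : QGP V :=
  ⟨C.coreNodes ∪ C.pos.biUnion (·.nodes), C.coreEdges ∪ C.posEdges,
   C.nlabel, C.elabel, C.attrC, C.cq⟩

/-- Well-formedness of a CGP: the core and each predicate are well-formed QGPs,
each predicate's query focus is a core node, and each predicate shares with the
core exactly its focus node. -/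
def CGP.WellFormed {V : Type} [DecidableEq V] (C : CGP V) : Prop :=
  C.coreQGP.WellFormed ∧
  (∀ q ∈ C.pos, (C.predQGP q).WellFormed ∧ q.focus ∈ C.coreNodes ∧
    q.focus ∈ q.nodes ∧ q.nodes ∩ C.coreNodes = {q.focus}) ∧
  (∀ q ∈ C.neg, (C.predQGP q).WellFormed ∧ q.focus ∈ C.coreNodes ∧
    q.focus ∈ q.nodes ∧ q.nodes ∩ C.coreNodes = {q.focus})

/-- A conditional-simulation relation of a CGP `C` in a data graph `G`:
conditions (1)–(3) on the core plus conditions (4)–(5) on predicates. -/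
def IsCondSimRel {V D : Type} (C : CGP V) (G : DataGraph D) (S : Set (V × D)) : Prop :=
  IsSimRel C.coreQGP G S ∧
  (∀ p ∈ S, ∀ q ∈ C.pos, q.focus = p.1 → SatPred (C.predQGP q) G p.1 p.2) ∧
  (∀ p ∈ S, ∀ q ∈ C.neg, q.focus = p.1 → ¬ SatPred (C.predQGP q) G p.1 p.2)

/-- `C ≺_c G` : the data graph `G` matches the CGP `C` via conditional simulation. -/
def CGP.Matches {V D : Type} (C : CGP V) (G : DataGraph D) : Prop :=
  ∃ S : Set (V × D), IsCondSimRel C G S ∧ ∀ u ∈ C.coreNodes, ∃ v, (u, v) ∈ S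

/-- The maximum conditional-simulation relation `S^G_C` of a CGP in a data graph. -/
def CGP.maxRel {V D : Type} (C : CGP V) (G : DataGraph D) : Set (V × D) :=
  ⋃₀ {S | IsCondSimRel C G S}

/-- The match result `M^G_C` on core nodes (∅ when `C ⊀_c G`). -/
def CGP.MN {V D : Type} (C : CGP V) (G : DataGraph D) (u : V) : Set D :=
  {v | C.Matches G ∧ (u, v) ∈ C.maxRel G}

/-- The match result `M^G_C` on core edges (∅ when `C ⊀_c G`). -/
def CGP.ME {V D : Type} (C : CGP V) (G : DataGraph D) (e : V × V) : Set (D × D) :=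
  {d | C.Matches G ∧ d ∈ G.edges ∧ (e.1, d.1) ∈ C.maxRel G ∧
      (e.2, d.2) ∈ C.maxRel G ∧ G.elabel d = C.elabel e}

/-- Traditional containment `C1 ⊑ C2` via the mapping `λ` (given by `lamN` on
core nodes, `lamE` on core edges): over every data graph, every match of a core
node (edge) of `C1` is a match of some node (edge) in its image under `λ`. -/
def TradContainedVia {V1 V2 : Type} (C1 : CGP V1) (C2 : CGP V2)
    (lamN : V1 → Set V2) (lamE : V1 × V1 → Set (V2 × V2)) : Prop :=
  (∀ u ∈ C1.coreNodes, lamN u ⊆ ↑C2.coreNodes) ∧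
  (∀ e ∈ C1.coreEdges, lamE e ⊆ ↑C2.coreEdges) ∧
  ∀ (D : Type) (G : DataGraph D), G.WellFormed →
    (∀ u ∈ C1.coreNodes, C1.MN G u ⊆ ⋃ u' ∈ lamN u, C2.MN G u') ∧
    (∀ e ∈ C1.coreEdges, C1.ME G e ⊆ ⋃ e' ∈ lamE e, C2.ME G e')

/-- Conditions (★) on a relation `S` between `C1⁺` and `C2⁺`. -/
def StarCond {V1 V2 : Type} [DecidableEq V1] [DecidableEq V2]
    (C1 : CGP V1) (C2 : CGP V2) (S : Set (V1 × V2)) : Prop :=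
  -- (1) S is a POM match relation witnessing C1⁺ ▷ C2⁺
  IsPOMRel C1.posVersion C2.posVersion S ∧
  (∀ u2 ∈ C2.posVersion.nodes, ∃ u1, (u1, u2) ∈ S) ∧
  -- (2) negative predicates of C2 are matched by negative predicates of C1
  (∀ p ∈ S, ∀ q2 ∈ C2.neg, q2.focus = p.2 →
      ∃ q1 ∈ C1.neg, q1.focus = p.1 ∧
        ∃ S' : Set (V2 × V1), IsPOMRel (C2.predQGP q2) (C1.predQGP q1) S' ∧
          (∀ w1 ∈ q1.nodes, ∃ w2, (w2, w1) ∈ S') ∧ (p.2, p.1) ∈ S') ∧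
  -- (3) core nodes and core edges of C1 are matched to core nodes/edges of C2
  (∀ u1 ∈ C1.coreNodes, ∃ u2 ∈ C2.coreNodes, (u1, u2) ∈ S) ∧
  (∀ e1 ∈ C1.coreEdges, ∃ e2 ∈ C2.coreEdges, (e1.1, e2.1) ∈ S ∧ (e1.2, e2.2) ∈ S)

/-- The mapping `λ` on core nodes induced by a match relation `S`. -/
def inducedLamN {V1 V2 : Type} (C2 : CGP V2) (S : Set (V1 × V2)) (u : V1) : Set V2 :=
  {u2 | u2 ∈ C2.coreNodes ∧ (u, u2) ∈ S}

/-- The mapping `λ` on core edges induced by a match relation `S`. -/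
def inducedLamE {V1 V2 : Type} (C2 : CGP V2) (S : Set (V1 × V2))
    (e : V1 × V1) : Set (V2 × V2) :=
  {e2 | e2 ∈ C2.coreEdges ∧ (e.1, e2.1) ∈ S ∧ (e.2, e2.2) ∈ S}

/-- The data nodes occurring in the match result of `C` over `G`. -/
def NodesInResult {V D : Type} (C : CGP V) (G : DataGraph D) : Set D :=
  ⋃ u ∈ C.coreNodes, C.MN G u

/-- Two data graphs have the same match result for `C`. -/
def MatchResultsAgree {V D : Type} (C : CGP V) (G G' : DataGraph D) : Prop :=
  (∀ u ∈ C.coreNodes, C.MN G u = C.MN G' u) ∧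
  (∀ e ∈ C.coreEdges, C.ME G e = C.ME G' e)

/-- `G` and `G'` are data graphs over the same node set that agree on the labels
and attribute values of all nodes occurring in their match results of `C2`, and
have the same match result of `C2`. -/
def GraphsAgreeFor {V2 D : Type} (C2 : CGP V2) (G G' : DataGraph D) : Prop :=
  G.nodes = G'.nodes ∧
  (∀ v ∈ NodesInResult C2 G ∪ NodesInResult C2 G',
      G.nlabel v = G'.nlabel v ∧ G.attr v = G'.attr v) ∧
  MatchResultsAgree C2 G G'

/-- A predicate `q` of `C1` (with query focus `q.focus`) is evaluable over a set
`lam` of core nodes of `C2`: for every data graph and every node in the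
intersection of the match sets of `lam`, satisfaction of the predicate is
determined by the match result of `C2` (together with labels and attribute
values of the nodes occurring in it). -/
def Evaluable {V1 V2 : Type} (C1 : CGP V1) (C2 : CGP V2)
    (lam : Set V2) (q : PredShape V1) : Prop :=
  ∀ (D : Type) (G G' : DataGraph D), G.WellFormed → G'.WellFormed →
    GraphsAgreeFor C2 G G' →
    ∀ v, v ∈ ⋂ u' ∈ lam, C2.MN G u' →
      (SatPred (C1.predQGP q) G q.focus v ↔ SatPred (C1.predQGP q) G' q.focus v)

/-- `r` is (a part of) a positive predicate of `C`, with the same query focus. -/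
def IsPartOfPos {V : Type} (C : CGP V) (r : PredShape V) : Prop :=
  ∃ q ∈ C.pos, r.nodes ⊆ q.nodes ∧ r.edges ⊆ q.edges ∧ r.focus = q.focus

/-- A containment match relation between two QGPs: a POM match relation
witnessing `Q1 ▷ Q2` in which moreover every node and edge of `Q1` is matched
to some node/edge of `Q2`. -/
def QGPContainRel {V1 V2 : Type} (Q1 : QGP V1) (Q2 : QGP V2)
    (S : Set (V1 × V2)) : Prop :=
  IsPOMRel Q1 Q2 S ∧ (∀ u2 ∈ Q2.nodes, ∃ u1, (u1, u2) ∈ S) ∧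
  (∀ u1 ∈ Q1.nodes, ∃ u2 ∈ Q2.nodes, (u1, u2) ∈ S) ∧
  (∀ e1 ∈ Q1.edges, ∃ e2 ∈ Q2.edges, (e1.1, e2.1) ∈ S ∧ (e1.2, e2.2) ∈ S)

/-- Remove the attribute constraints on the query focus `u`. -/
def QGP.removeFocusAttr {V : Type} [DecidableEq V] (Q : QGP V) (u : V) : QGP V :=
  { Q with attrC := fun w => if w = u then (∅ : AttrConstraints) else Q.attrC w }

/-- `Q1(u1) ≡ Q2(u2)` : equivalence of QGPs with query foci — mutual containment
(after dropping the attribute constraints on the foci) via maximum match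
relations that relate the two foci. -/
def FocusEquiv {V1 V2 : Type} [DecidableEq V1] [DecidableEq V2]
    (Q1 : QGP V1) (u1 : V1) (Q2 : QGP V2) (u2 : V2) : Prop :=
  ∃ (S12 : Set (V1 × V2)) (S21 : Set (V2 × V1)),
    QGPContainRel (Q1.removeFocusAttr u1) (Q2.removeFocusAttr u2) S12 ∧
    (∀ S, QGPContainRel (Q1.removeFocusAttr u1) (Q2.removeFocusAttr u2) S → S ⊆ S12) ∧
    QGPContainRel (Q2.removeFocusAttr u2) (Q1.removeFocusAttr u1) S21 ∧
    (∀ S, QGPContainRel (Q2.removeFocusAttr u2) (Q1.removeFocusAttr u1) S → S ⊆ S21) ∧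
    (u1, u2) ∈ S12 ∧ (u2, u1) ∈ S21

/-- The refinement relation `R⁺` for positive predicates determined by `S`. -/
def Rplus {V1 V2 : Type} [DecidableEq V1] (C1 : CGP V1) (C2 : CGP V2)
    (S : Set (V1 × V2)) : Set ((V1 × V1) × (V2 × V2)) :=
  {p | p.1 ∈ C1.posEdges ∧ p.2 ∈ C2.coreEdges ∧
       (p.1.1, p.2.1) ∈ S ∧ (p.1.2, p.2.2) ∈ S}

/-- The elimination relation `E⁺` for positive predicates determined by `S`. -/
def Eplus {V1 V2 : Type} [DecidableEq V1] [DecidableEq V2]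
    (C1 : CGP V1) (C2 : CGP V2) (S : Set (V1 × V2)) :
    Set (PredShape V1 × V2) :=
  {p | IsPartOfPos C1 p.1 ∧ (p.1.focus, p.2) ∈ S ∧ p.2 ∈ C2.coreNodes ∧
       (∃ r2 : PredShape V2, IsPartOfPos C2 r2 ∧ r2.focus = p.2 ∧
          FocusEquiv (C1.predQGP p.1) p.1.focus (C2.predQGP r2) r2.focus) ∧
       (∀ e ∈ C1.posEdges, e ∉ p.1.edges →
          (e.1 ∈ p.1.nodes → e.1 = p.1.focus) ∧
          (e.2 ∈ p.1.nodes → e.2 = p.1.focus))}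

/-- `u1 ∼ u2` for pattern nodes of two CGPs: equal labels and entailed
attribute constraints. -/
def NodeSimC {V1 V2 : Type} (C1 : CGP V1) (C2 : CGP V2) (u1 : V1) (u2 : V2) : Prop :=
  C1.nlabel u1 = C2.nlabel u2 ∧ constrEntails (C1.attrC u1) (C2.attrC u2)

/-- `e ∼ e'` for pattern edges of two CGPs: matching endpoints, equal edge
labels, and counting quantifier of `e` at least that of `e'`. -/
def EdgeSimC {V1 V2 : Type} (C1 : CGP V1) (C2 : CGP V2)
    (e : V1 × V1) (e' : V2 × V2) : Prop :=
  NodeSimC C1 C2 e.1 e'.1 ∧ NodeSimC C1 C2 e.2 e'.2 ∧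
  C1.elabel e = C2.elabel e' ∧ C2.cq e' ≤ C1.cq e

/-- Two directed edges intersect in some node (for undirected paths). -/
def EdgesTouch {V : Type} (e f : V × V) : Prop :=
  e.1 = f.1 ∨ e.1 = f.2 ∨ e.2 = f.1 ∨ e.2 = f.2

/-- An undirected path among the edges `E`, starting at the node `u`. -/
def IsUPath {V : Type} (E : Set (V × V)) (u : V) (l : List (V × V)) : Prop :=
  (∀ e ∈ l, e ∈ E) ∧ List.Chain' EdgesTouch l ∧
  (∀ e, l.head? = some e → (e.1 = u ∨ e.2 = u))

/-- The refinement relation `R⁻` for negative predicates determined by `S`: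
`(e, e')` with `e` an edge of a negative predicate of `C1`, `e'` a core edge of
`C2`, `e ∼ e'`, and undirected paths from a pair `(u,w) ∈ S` leading to `e`
resp. `e'` whose corresponding edges are already in `R⁻`. -/
inductive InRminus {V1 V2 : Type} (C1 : CGP V1) (C2 : CGP V2)
    (S : Set (V1 × V2)) : (V1 × V1) → (V2 × V2) → Prop where
  | intro (e : V1 × V1) (e' : V2 × V2) (q : PredShape V1)
      (hq : q ∈ C1.neg) (he : e ∈ q.edges) (he' : e' ∈ C2.coreEdges)
      (hsim : EdgeSimC C1 C2 e e')
      (u : V1) (w : V2) (huw : (u, w) ∈ S)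
      (l1 : List (V1 × V1)) (l2 : List (V2 × V2)) (hlen : l1.length = l2.length)
      (hp1 : IsUPath (fun x => x ∈ q.edges) u (l1 ++ [e]))
      (hp2 : IsUPath (fun x => x ∈ C2.coreEdges) w (l2 ++ [e']))
      (hrec : ∀ i : Fin l1.length,
        InRminus C1 C2 S (l1.get i) (l2.get (Fin.cast hlen i))) :
      InRminus C1 C2 S e e'

/-- The elimination relation `E⁻` for negative predicates determined by `S`. -/
def Eminus {V1 V2 : Type} [DecidableEq V1] [DecidableEq V2]
    (C1 : CGP V1) (C2 : CGP V2) (S : Set (V1 × V2)) :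
    Set (PredShape V1 × V2) :=
  {p | p.1 ∈ C1.neg ∧ (p.1.focus, p.2) ∈ S ∧
       ∃ q2 ∈ C2.neg, q2.focus = p.2 ∧
         FocusEquiv (C1.predQGP p.1) p.1.focus (C2.predQGP q2) q2.focus}

theorem AOp.exists_not_holds (op : AOp) (c : ℤ) : ∃ x, ¬ op.holds x c := by
  cases op
  · exact ⟨c - 1, by simp [AOp.holds]⟩
  · exact ⟨c + 1, by simp [AOp.holds]⟩
  · exact ⟨c + 1, by simp [AOp.holds]⟩
  · exact ⟨c, by simp [AOp.holds]⟩

theorem attrMatch_of_entails {a : ℕ → Option ℤ} {P1 P2 : AttrConstraints}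
    (h : attrMatch a P1) (he : constrEntails P1 P2) : attrMatch a P2 := by
  intro c2 hc2
  have hex : ∃ c1 ∈ P1, c1.1 = c2.1 := by
    by_contra hno
    obtain ⟨x, hx⟩ := AOp.exists_not_holds c2.2.1 c2.2.2
    exact hx (he c2 hc2 x fun c1 h1 h2 => absurd ⟨c1, h1, h2⟩ hno)
  obtain ⟨c1, h1, h12⟩ := hex
  obtain ⟨x, hx, -⟩ := h c1 h1
  rw [h12] at hx
  refine ⟨x, hx, he c2 hc2 x fun d hd hd2 => ?_⟩
  obtain ⟨y, hy, hh⟩ := h d hd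
  rw [hd2, hx] at hy
  cases hy
  exact hh

/-- Composition of a POM relation with a simulation relation is a simulation relation. -/
theorem isSimRel_comp {V1 V2 D : Type} {Q1 : QGP V1} {Q2 : QGP V2} {S : Set (V1 × V2)}
    (hS : IsPOMRel Q1 Q2 S) {G : DataGraph D} {R : Set (V1 × D)} (hR : IsSimRel Q1 G R) :
    IsSimRel Q2 G {p | ∃ u, (u, p.1) ∈ S ∧ (u, p.2) ∈ R} := by
  obtain ⟨s0, s1, s2, s3⟩ := hS
  obtain ⟨r0, r1, r2, r3⟩ := hR
  refine ⟨?_, ?_, ?_, ?_⟩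
  · rintro ⟨u2, v⟩ ⟨u, hu, hv⟩
    exact ⟨(s0 _ hu).2, (r0 _ hv).2⟩
  · rintro ⟨u2, v⟩ ⟨u, hu, hv⟩
    exact ⟨(s1 _ hu).1.symm.trans (r1 _ hv).1, attrMatch_of_entails (r1 _ hv).2 (s1 _ hu).2⟩
  · rintro ⟨u2, v⟩ ⟨u, hu, hv⟩ w2 hw
    obtain ⟨w1, e1, hws, hl, hc⟩ := s3 _ hu w2 hw
    obtain ⟨T, hT, hT2⟩ := r2 _ hv w1 e1
    refine ⟨T, hc.trans hT, fun v' hv' => ?_⟩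
    obtain ⟨a, b, c⟩ := hT2 v' hv'
    exact ⟨a, b.trans hl, w1, hws, c⟩
  · rintro ⟨u2, v⟩ ⟨u, hu, hv⟩ w2 hw
    obtain ⟨w1, e1, hws, hl⟩ := s2 _ hu w2 hw
    obtain ⟨v', a, b, c⟩ := r3 _ hv w1 e1
    exact ⟨v', a, b.trans hl, w1, hws, c⟩

/-- If `S` is a POM match relation witnessing `Q1 ▷ Q2`, then for
every data graph `G` with `Q1 ≺_c G`, all pairs `(u1,u2), (w1,w2) ∈ S` and all
edges `e1 = (u1,w1) ∈ E1`, `e2 = (u2,w2) ∈ E2` with equal labels and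
`C1(e1) ≥ C2(e2)`, `M^G_{Q1}(e1) ⊆ M^G_{Q2}(e2)`. -/
theorem pom_edge_match_subset {V1 V2 D : Type} (Q1 : QGP V1) (Q2 : QGP V2)
    (hQ1 : Q1.WellFormed) (hQ2 : Q2.WellFormed)
    (S : Set (V1 × V2)) (hS : IsPOMRel Q1 Q2 S)
    (hcov : ∀ u2 ∈ Q2.nodes, ∃ u1, (u1, u2) ∈ S)
    (G : DataGraph D) (hG : G.WellFormed) (hM : Q1.Matches G)
    (u1 w1 : V1) (u2 w2 : V2)
    (hu : (u1, u2) ∈ S) (hw : (w1, w2) ∈ S)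
    (he1 : (u1, w1) ∈ Q1.edges) (he2 : (u2, w2) ∈ Q2.edges)
    (hlab : Q1.elabel (u1, w1) = Q2.elabel (u2, w2))
    (hcq : Q2.cq (u2, w2) ≤ Q1.cq (u1, w1)) :
    Q1.ME G (u1, w1) ⊆ Q2.ME G (u2, w2) := by
  have key : ∀ (a : V1) (b : V2) (v : D), (a, b) ∈ S → (a, v) ∈ Q1.maxRel G →
      (b, v) ∈ Q2.maxRel G := by
    rintro a b v hab ⟨R, hR, hav⟩
    exact ⟨_, isSimRel_comp hS hR, a, hab, hav⟩
  rintro ⟨x, y⟩ ⟨-, hd, hx, hy, hl⟩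
  refine ⟨?_, hd, key _ _ _ hu hx, key _ _ _ hw hy, hl.trans hlab⟩
  obtain ⟨R, hR, hRc⟩ := hM
  refine ⟨_, isSimRel_comp hS hR, fun b hb => ?_⟩
  obtain ⟨a, hab⟩ := hcov b hb
  obtain ⟨v, hv⟩ := hRc a (hS.1 _ hab).1
  exact ⟨v, a, hab, hv⟩
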